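/- Let μ be a Borel probability measure on [0,1)^d assigning zero mass to the boundary of every dyadic cube, and let ℓ ∈ ℕ. Then for μ-almost every x, (1/n)·( −log₂ μ(Q_n(x)) − (1/ℓ)·Σ_{i=1}^{n} H(μ_ℓ^{Q_i(x)}) ) → 0 as n → ∞. -/

import Mathlib

open MeasureTheory Filter Metric Set

/-- The half-open dyadic cell of level `n` with index `j`, i.e. `∏ᵢ [jᵢ/2ⁿ, (jᵢ+1)/2ⁿ)`. -/
def dyadicCell (d n : ℕ) (j : Fin d → ℤ) : Set (EuclideanSpace ℝ (Fin d)) :=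
  {y | ∀ i, (j i : ℝ) / 2 ^ n ≤ y i ∧ y i < ((j i : ℝ) + 1) / 2 ^ n}

/-- The index of the level-`n` dyadic cube containing `x`. -/
noncomputable def dyadicIdx (d n : ℕ) (x : EuclideanSpace ℝ (Fin d)) : Fin d → ℤ :=
  fun i => ⌊(2 : ℝ) ^ n * x i⌋

/-- `Q_n(x)`: the (unique) half-open dyadic cube of level `n` containing `x`. -/
noncomputable def Qcube (d n : ℕ) (x : EuclideanSpace ℝ (Fin d)) :
    Set (EuclideanSpace ℝ (Fin d)) :=
  dyadicCell d n (dyadicIdx d n x)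

/-- `Q` is a dyadic cube (of some level) inside the unit cube `[0,1)^d`. -/
def IsDyadicCube (d : ℕ) (Q : Set (EuclideanSpace ℝ (Fin d))) : Prop :=
  ∃ (n : ℕ) (j : Fin d → ℤ), (∀ i, 0 ≤ j i ∧ j i < 2 ^ n) ∧ Q = dyadicCell d n j

/-- The half-open unit cube `[0,1)^d`. -/
def unitCube (d : ℕ) : Set (EuclideanSpace ℝ (Fin d)) := dyadicCell d 0 0

/-- `H(μ_ℓ^{Q_n(x)})`: the base-2 entropy of the probability vector given by the relative
`μ`-measures of the `2^{ℓd}` level-`ℓ` dyadic subcubes of `Q_n(x)` (with the convention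
`0·log 0 = 0`). -/
noncomputable def condEntropy' (d ℓ n : ℕ) (μ : Measure (EuclideanSpace ℝ (Fin d)))
    (x : EuclideanSpace ℝ (Fin d)) : ℝ :=
  ∑ k : Fin d → Fin (2 ^ ℓ),
    (fun p : ℝ => -(p * Real.logb 2 p))
      ((μ (dyadicCell d (n + ℓ)
          (fun i => 2 ^ ℓ * dyadicIdx d n x i + ((k i : ℕ) : ℤ)))).toReal /
        (μ (Qcube d n x)).toReal)

theorem aux_bc {Ω : Type*} [MeasurableSpace Ω] {μ : Measure Ω} (W : ℕ → Ω → ℝ)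
    (hW : ∀ k, Integrable (fun x => (W k x) ^ 2) μ) (b : ℕ → ℝ) (hb : Summable b)
    (hle : ∀ k, ∫ x, (W k x) ^ 2 ∂μ ≤ b k) :
    ∀ᵐ x ∂μ, Tendsto (fun k => W k x) atTop (nhds 0) := by
  have hb0 : ∀ k, 0 ≤ b k := fun k => le_trans (integral_nonneg fun x => sq_nonneg _) (hle k)
  have h1 : ∫⁻ x, ∑' k, ENNReal.ofReal ((W k x) ^ 2) ∂μ ≠ ⊤ := by
    rw [lintegral_tsum fun k => (hW k).aestronglyMeasurable.aemeasurable.ennreal_ofReal]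
    have : ∀ k, ∫⁻ x, ENNReal.ofReal ((W k x) ^ 2) ∂μ ≤ ENNReal.ofReal (b k) := by
      intro k
      rw [← ofReal_integral_eq_lintegral_ofReal (hW k) (ae_of_all _ fun x => sq_nonneg _)]
      exact ENNReal.ofReal_le_ofReal (hle k)
    refine ne_top_of_le_ne_top ?_ (ENNReal.tsum_le_tsum this)
    exact hb.tsum_ofReal_ne_top
  have h2 := ae_lt_top' (AEMeasurable.tsum fun k =>
    (hW k).aestronglyMeasurable.aemeasurable.ennreal_ofReal) h1
  filter_upwards [h2] with x hx
  have h3 := ENNReal.tendsto_atTop_zero_of_tsum_ne_top hx.ne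
  have h4 : Tendsto (fun k => (W k x) ^ 2) atTop (nhds 0) := by
    have := (ENNReal.tendsto_toReal ENNReal.zero_ne_top).comp h3
    refine this.congr fun k => ?_
    simp [ENNReal.toReal_ofReal (sq_nonneg _)]
  have h5 := h4.sqrt
  simp only [Real.sqrt_sq_eq_abs, Real.sqrt_zero] at h5
  exact (tendsto_zero_iff_abs_tendsto_zero _).2 h5

theorem aux_summable (c : ℝ) : Summable (fun k : ℕ => c / ((k : ℝ) ^ 2)) := by
  have := (Real.summable_one_div_nat_pow (p := 2)).2 (by norm_num)
  simpa [div_eq_mul_inv] using this.mul_left c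

theorem aux_int_mul {Ω : Type*} [MeasurableSpace Ω] {μ : Measure Ω} (X Y : Ω → ℝ)
    (hX : MemLp X 2 μ) (hY : MemLp Y 2 μ) : Integrable (fun x => X x * Y x) μ :=
  hX.integrable_mul hY

theorem aux_cs {Ω : Type*} [MeasurableSpace Ω] {μ : Measure Ω} (X Y : Ω → ℝ) (C : ℝ)
    (hX : MemLp X 2 μ) (hY : MemLp Y 2 μ)
    (h1 : ∫ x, (X x) ^ 2 ∂μ ≤ C) (h2 : ∫ x, (Y x) ^ 2 ∂μ ≤ C) :
    ∫ x, X x * Y x ∂μ ≤ C := by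
  have e : ∫ x, (2⁻¹ * (X x) ^ 2 + 2⁻¹ * (Y x) ^ 2) ∂μ ≤ C := by
    rw [integral_add (hX.integrable_sq.const_mul _) (hY.integrable_sq.const_mul _),
      integral_const_mul, integral_const_mul]
    linarith
  refine le_trans (integral_mono (aux_int_mul X Y hX hY)
    ((hX.integrable_sq.const_mul _).add (hY.integrable_sq.const_mul _)) ?_) e
  intro x
  simp only [Pi.add_apply]
  nlinarith [sq_nonneg (X x - Y x)]

theorem aux_sq_sum {Ω : Type*} [MeasurableSpace Ω] {μ : Measure Ω} (X : ℕ → Ω → ℝ)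
    (hX : ∀ i, MemLp (X i) 2 μ) (s : Finset ℕ) :
    ∫ x, (∑ i ∈ s, X i x) ^ 2 ∂μ = ∑ i ∈ s, ∑ j ∈ s, ∫ x, X i x * X j x ∂μ := by
  simp_rw [sq, Finset.sum_mul_sum]
  rw [integral_finsetSum _ fun i _ => integrable_finsetSum _ fun j _ =>
    aux_int_mul _ _ (hX i) (hX j)]
  refine Finset.sum_congr rfl fun i _ => ?_
  rw [integral_finsetSum _ fun j _ => aux_int_mul _ _ (hX i) (hX j)]

theorem aux_slln {Ω : Type*} [MeasurableSpace Ω] {μ : Measure Ω} (X : ℕ → Ω → ℝ) (C : ℝ) (l : ℕ)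
    (hX : ∀ i, MemLp (X i) 2 μ) (hC : ∀ i, ∫ x, (X i x) ^ 2 ∂μ ≤ C)
    (ho : ∀ i j, i + l ≤ j → ∫ x, X i x * X j x ∂μ = 0) :
    ∀ᵐ x ∂μ, Tendsto (fun n : ℕ => (1 / (n : ℝ)) * ∑ i ∈ Finset.range n, X i x)
      atTop (nhds 0) := by
  have hC0 : 0 ≤ C := le_trans (integral_nonneg fun x => sq_nonneg _) (hC 0)
  -- first moment bound
  have hS : ∀ n : ℕ, ∫ x, (∑ i ∈ Finset.range n, X i x) ^ 2 ∂μ ≤ n * (2 * l * C) := by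
    intro n
    rw [aux_sq_sum X hX]
    have : ∀ i ∈ Finset.range n,
        ∑ j ∈ Finset.range n, ∫ x, X i x * X j x ∂μ ≤ 2 * l * C := by
      intro i _
      have hz : ∀ j, j ∉ Finset.Ico (i - l) (i + l) → ∫ x, X i x * X j x ∂μ = 0 := by
        intro j hj
        simp only [Finset.mem_Ico, not_and_or, not_le, not_lt] at hj
        rcases hj with hj | hj
        · have := ho j i (by omega)
          simpa [mul_comm] using this
        · exact ho i j hj
      calc ∑ j ∈ Finset.range n, ∫ x, X i x * X j x ∂μ
          = ∑ j ∈ Finset.range n ∩ Finset.Ico (i - l) (i + l), ∫ x, X i x * X j x ∂μ := by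
            symm
            apply Finset.sum_subset Finset.inter_subset_left
            intro j hj hj'
            apply hz
            intro h
            exact hj' (Finset.mem_inter.2 ⟨hj, h⟩)
        _ ≤ ∑ j ∈ Finset.range n ∩ Finset.Ico (i - l) (i + l), C :=
            Finset.sum_le_sum fun j _ => aux_cs _ _ C (hX i) (hX j) (hC i) (hC j)
        _ ≤ 2 * l * C := by
            rw [Finset.sum_const, nsmul_eq_mul]
            gcongr
            have := Finset.card_le_card (Finset.inter_subset_right (s₁ := Finset.range n)
              (s₂ := Finset.Ico (i - l) (i + l)))
            rw [Nat.card_Ico] at this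
            have h2 : (Finset.range n ∩ Finset.Ico (i - l) (i + l)).card ≤ 2 * l := by omega
            exact_mod_cast h2
    calc _ ≤ ∑ i ∈ Finset.range n, (2 * l * C) := Finset.sum_le_sum this
      _ = _ := by simp
  have hA : ∀ i, MemLp (fun x => |X i x|) 2 μ := fun i => (hX i).abs
  have hB : ∀ s : Finset ℕ, ∫ x, (∑ i ∈ s, |X i x|) ^ 2 ∂μ ≤ (s.card : ℝ) ^ 2 * C := by
    intro s
    rw [aux_sq_sum (fun i x => |X i x|) hA]
    calc _ ≤ ∑ i ∈ s, ∑ j ∈ s, C := Finset.sum_le_sum fun i _ => Finset.sum_le_sum fun j _ =>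
            aux_cs _ _ C (hA i) (hA j) (by simpa using hC i) (by simpa using hC j)
      _ = _ := by simp; ring
  have hY := aux_bc (μ := μ) (fun k x => (∑ i ∈ Finset.range (k ^ 2), X i x) / (k : ℝ) ^ 2)
    (fun k => by
      simp_rw [div_pow]
      exact (memLp_finsetSum _ fun i _ => hX i).integrable_sq.div_const _)
    _ (aux_summable (2 * l * C)) (fun k => by
      simp_rw [div_pow]
      rw [integral_div]
      rcases Nat.eq_zero_or_pos k with rfl | hk
      · simp
      have := hS (k ^ 2)
      have hk' : (0 : ℝ) < k := by exact_mod_cast hk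
      rw [div_le_div_iff₀ (by positivity) (by positivity)]
      push_cast at this
      calc _ ≤ ((k : ℝ) ^ 2 * (2 * l * C)) * (k : ℝ) ^ 2 := by gcongr
        _ = _ := by ring)
  have hZ := aux_bc (μ := μ)
    (fun k x => (∑ i ∈ Finset.Ico (k ^ 2) ((k + 1) ^ 2), |X i x|) / (k : ℝ) ^ 2)
    (fun k => by
      simp_rw [div_pow]
      exact (memLp_finsetSum _ fun i _ => hA i).integrable_sq.div_const _)
    _ (aux_summable (9 * C)) (fun k => by
      simp_rw [div_pow]
      rw [integral_div]
      rcases Nat.eq_zero_or_pos k with rfl | hk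
      · simp
      have := hB (Finset.Ico (k ^ 2) ((k + 1) ^ 2))
      have hc : ((Finset.Ico (k ^ 2) ((k + 1) ^ 2)).card : ℝ) ≤ 3 * k := by
        rw [Nat.card_Ico]
        have : (k + 1) ^ 2 - k ^ 2 ≤ 3 * k := by
          have : (k + 1) ^ 2 = k ^ 2 + (2 * k + 1) := by ring
          omega
        exact_mod_cast this
      have hk' : (0 : ℝ) < k := by exact_mod_cast hk
      rw [div_le_div_iff₀ (by positivity) (by positivity)]
      calc _ ≤ ((3 * k : ℝ) ^ 2 * C) * (k : ℝ) ^ 2 := by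
            gcongr
            refine this.trans ?_
            gcongr
        _ = _ := by ring)
  filter_upwards [hY, hZ] with x hy hz
  have hsq : Tendsto Nat.sqrt atTop atTop := by
    refine tendsto_atTop_atTop.2 fun b => ⟨b ^ 2, fun a ha => ?_⟩
    exact Nat.le_sqrt'.2 ha
  have h1 := ((hy.abs).comp hsq).add (hz.comp hsq)
  simp only [abs_zero, add_zero] at h1
  refine squeeze_zero_norm' ?_ h1
  filter_upwards [eventually_ge_atTop 1] with n hn
  have hk : 1 ≤ Nat.sqrt n := Nat.le_sqrt'.2 (by simpa using hn)
  have hk1 := Nat.sqrt_le' n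
  have hk2 := Nat.lt_succ_sqrt' n
  simp only [Function.comp]
  set k := Nat.sqrt n
  have hk' : (0 : ℝ) < k := by exact_mod_cast hk
  have hkn : (k : ℝ) ^ 2 ≤ n := by exact_mod_cast hk1
  have hsum : |∑ i ∈ Finset.range n, X i x| ≤ |∑ i ∈ Finset.range (k ^ 2), X i x| +
      ∑ i ∈ Finset.Ico (k ^ 2) ((k + 1) ^ 2), |X i x| := by
    rw [← Finset.sum_range_add_sum_Ico _ hk1]
    refine (abs_add_le _ _).trans ?_
    gcongr
    refine (Finset.abs_sum_le_sum_abs _ _).trans ?_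
    refine Finset.sum_le_sum_of_subset_of_nonneg ?_ fun _ _ _ => abs_nonneg _
    exact Finset.Ico_subset_Ico le_rfl hk2.le
  rw [Real.norm_eq_abs, abs_mul, abs_of_nonneg (by positivity : (0:ℝ) ≤ 1 / (n : ℝ)),
    abs_div (∑ i ∈ Finset.range (k ^ 2), X i x),
    abs_of_pos (show (0:ℝ) < (k : ℝ) ^ 2 by positivity), ← add_div, one_div_mul_eq_div]
  gcongr

theorem aux_plog (p : ℝ) (h0 : 0 ≤ p) (h1 : p ≤ 1) :
    |p * Real.logb 2 p| ≤ 1 / Real.log 2 := by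
  have h2 : 0 < Real.log 2 := Real.log_pos (by norm_num)
  rcases h0.eq_or_lt with rfl | hp
  · simp; positivity
  have := Real.abs_log_mul_self_lt p hp h1
  rw [Real.logb, ← mul_div_assoc, abs_div, abs_of_pos h2, mul_comm p]
  gcongr

theorem aux_plog2 (p : ℝ) (h0 : 0 ≤ p) (h1 : p ≤ 1) :
    p * (Real.logb 2 p) ^ 2 ≤ 4 / (Real.log 2) ^ 2 := by
  have h2 : 0 < Real.log 2 := Real.log_pos (by norm_num)
  rcases h0.eq_or_lt with rfl | hp
  · simp; positivity
  have h3 := Real.abs_log_mul_self_lt (√p) (Real.sqrt_pos.2 hp) (Real.sqrt_le_one.2 h1)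
  rw [Real.log_sqrt h0] at h3
  have h4 : (Real.log p / 2 * √p) ^ 2 ≤ 1 := by
    rw [← sq_abs]
    exact pow_le_one₀ (abs_nonneg _) h3.le
  rw [mul_pow, Real.sq_sqrt h0] at h4
  rw [Real.logb, div_pow, ← mul_div_assoc]
  gcongr
  nlinarith

theorem aux_tele (L : ℕ → ℝ) (l n : ℕ) :
    ∑ i ∈ Finset.range n, (L (i + 1 + l) - L (i + 1)) =
      ∑ j ∈ Finset.range l, (L (n + 1 + j) - L (1 + j)) := by
  induction n with
  | zero => simp
  | succ n ih =>
    rw [Finset.sum_range_succ, ih]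
    have h := Finset.sum_range_succ (fun j => L (n + 1 + j)) l
    have h' := Finset.sum_range_succ' (fun j => L (n + 1 + j)) l
    simp only [Finset.sum_sub_distrib]
    have : ∑ j ∈ Finset.range l, L (n + 1 + 1 + j) = ∑ j ∈ Finset.range l, L (n + 1 + (j + 1)) :=
      Finset.sum_congr rfl fun j _ => by congr 1; omega
    rw [this]
    rw [h'] at h
    simp only [add_zero] at h
    linarith

/-- deterministic end-game -/
theorem aux_final (L H : ℕ → ℝ) (l : ℕ) (hl : 0 < l) (hmono : Monotone L)
    (h1 : Tendsto (fun n : ℕ => (L (n + l) - L n) / (n : ℝ)) atTop (nhds 0))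
    (h2 : Tendsto (fun n : ℕ => (1 / (n : ℝ)) *
      ∑ i ∈ Finset.range n, ((L (i + 1 + l) - L (i + 1)) - H (i + 1))) atTop (nhds 0)) :
    Tendsto (fun n : ℕ => (1 / (n : ℝ)) * (L n - (1 / (l : ℝ)) * ∑ i ∈ Finset.Icc 1 n, H i))
      atTop (nhds 0) := by
  have hl' : (0 : ℝ) < l := by exact_mod_cast hl
  set K : ℝ := ∑ j ∈ Finset.range l, L (1 + j)
  have hdiff : Tendsto (fun n : ℕ => (1 / (n : ℝ)) *
      (L n - (1 / (l : ℝ)) * ∑ i ∈ Finset.range n, (L (i + 1 + l) - L (i + 1))))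
      atTop (nhds 0) := by
    have hK : Tendsto (fun n : ℕ => (|K| / l) / (n : ℝ)) atTop (nhds 0) :=
      tendsto_const_div_atTop_nhds_zero_nat _
    have h3 := h1.add hK
    simp only [add_zero] at h3
    refine squeeze_zero_norm (fun n => ?_) h3
    rw [aux_tele, Real.norm_eq_abs, abs_mul, abs_of_nonneg (by positivity : (0:ℝ) ≤ 1 / (n : ℝ)),
      one_div_mul_eq_div, ← add_div]
    gcongr
    have e : L n - 1 / (l : ℝ) * ∑ j ∈ Finset.range l, (L (n + 1 + j) - L (1 + j)) =
        (1 / (l : ℝ)) * (K - ∑ j ∈ Finset.range l, (L (n + 1 + j) - L n)) := by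
      simp only [Finset.sum_sub_distrib, Finset.sum_const, Finset.card_range, nsmul_eq_mul, K]
      field_simp
      ring
    have b0 : 0 ≤ ∑ j ∈ Finset.range l, (L (n + 1 + j) - L n) :=
      Finset.sum_nonneg fun j _ => sub_nonneg.2 (hmono (by omega))
    have b1 : ∑ j ∈ Finset.range l, (L (n + 1 + j) - L n) ≤ l * (L (n + l) - L n) := by
      calc _ ≤ ∑ j ∈ Finset.range l, (L (n + l) - L n) := by
            refine Finset.sum_le_sum fun j hj => ?_
            have := Finset.mem_range.1 hj
            exact sub_le_sub_right (hmono (by omega)) _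
        _ = _ := by simp; ring
    rw [e, abs_mul, abs_of_pos (by positivity : (0:ℝ) < 1 / (l : ℝ)), one_div_mul_eq_div,
      div_le_iff₀ hl', add_mul, div_mul_cancel₀ _ hl'.ne']
    refine (abs_sub _ _).trans ?_
    rw [abs_of_nonneg b0]
    linarith
  have h4 := hdiff.add (h2.const_mul (1 / (l : ℝ)))
  simp only [mul_zero, add_zero] at h4
  refine h4.congr fun n => ?_
  have : ∑ i ∈ Finset.Icc 1 n, H i = ∑ i ∈ Finset.range n, H (i + 1) := by
    rw [Finset.range_eq_Ico, Finset.sum_Ico_add' (fun i => H i) 0 n 1]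
    rfl
  rw [this, Finset.sum_sub_distrib (fun i => L (i + 1 + l) - L (i + 1))]
  ring

theorem aux_mem_cell (d n : ℕ) (j : Fin d → ℤ) (x : EuclideanSpace ℝ (Fin d)) :
    x ∈ dyadicCell d n j ↔ dyadicIdx d n x = j := by
  have h2 : (0 : ℝ) < 2 ^ n := by positivity
  simp only [dyadicCell, dyadicIdx, Set.mem_setOf_eq, funext_iff]
  refine forall_congr' fun i => ?_
  rw [Int.floor_eq_iff, div_le_iff₀ h2, lt_div_iff₀ h2, mul_comm]

theorem aux_idx_div (d n l : ℕ) (x : EuclideanSpace ℝ (Fin d)) (i : Fin d) :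
    dyadicIdx d n x i = dyadicIdx d (n + l) x i / 2 ^ l := by
  simp only [dyadicIdx]
  have h := Int.floor_div_natCast ((2 : ℝ) ^ (n + l) * x i) (2 ^ l)
  push_cast at h
  rw [← h]
  congr 1
  rw [pow_add]
  field_simp

theorem aux_meas_cell (d n : ℕ) (j : Fin d → ℤ) : MeasurableSet (dyadicCell d n j) := by
  have : dyadicCell d n j = ⋂ i, {y : EuclideanSpace ℝ (Fin d) |
      (j i : ℝ) / 2 ^ n ≤ y i ∧ y i < ((j i : ℝ) + 1) / 2 ^ n} := by
    ext y; simp [dyadicCell]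
  rw [this]
  refine MeasurableSet.iInter fun i => ?_
  have hm : Measurable fun y : EuclideanSpace ℝ (Fin d) => y i := by fun_prop
  exact (measurableSet_le measurable_const hm).inter (measurableSet_lt hm measurable_const)

/-- child index -/
def auxSub (d l : ℕ) (j : Fin d → ℤ) (k : Fin d → Fin (2 ^ l)) : Fin d → ℤ :=
  fun i => 2 ^ l * j i + ((k i : ℕ) : ℤ)

theorem aux_sub_div (d l : ℕ) (j : Fin d → ℤ) (k : Fin d → Fin (2 ^ l)) (i : Fin d) :
    auxSub d l j k i / 2 ^ l = j i := by
  have h : (((k i : ℕ) : ℤ)) < 2 ^ l := by exact_mod_cast (k i).2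
  have hp : (0 : ℤ) < 2 ^ l := by positivity
  simp only [auxSub]
  rw [Int.add_comm, Int.add_mul_ediv_left _ _ hp.ne', Int.ediv_eq_zero_of_lt (by positivity) h,
    zero_add]

theorem aux_sub_inj (d l : ℕ) (j j' : Fin d → ℤ) (k k' : Fin d → Fin (2 ^ l))
    (h : auxSub d l j k = auxSub d l j' k') : j = j' ∧ k = k' := by
  have hj : j = j' := by
    funext i
    rw [← aux_sub_div d l j k i, ← aux_sub_div d l j' k' i, h]
  refine ⟨hj, ?_⟩
  subst hj
  funext i
  have := congrFun h i
  simp only [auxSub] at this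
  apply Fin.ext
  omega

theorem aux_sub_exists (d l : ℕ) (J : Fin d → ℤ) :
    ∃ k, J = auxSub d l (fun i => J i / 2 ^ l) k := by
  have hp : (0 : ℤ) < 2 ^ l := by positivity
  refine ⟨fun i => ⟨(J i % 2 ^ l).toNat, ?_⟩, ?_⟩
  · have h1 := Int.emod_lt_of_pos (J i) hp
    have h2 := Int.emod_nonneg (J i) hp.ne'
    zify
    rwa [Int.toNat_of_nonneg h2]
  · funext i
    have h2 := Int.emod_nonneg (J i) hp.ne'
    simp only [auxSub]
    rw [Int.toNat_of_nonneg h2, Int.mul_ediv_add_emod]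

theorem aux_cell_iff (d n l : ℕ) (j : Fin d → ℤ) (x : EuclideanSpace ℝ (Fin d)) :
    x ∈ dyadicCell d n j ↔ ∃ k, x ∈ dyadicCell d (n + l) (auxSub d l j k) := by
  simp only [aux_mem_cell]
  constructor
  · rintro rfl
    obtain ⟨k, hk⟩ := aux_sub_exists d l (dyadicIdx d (n + l) x)
    refine ⟨k, hk.trans ?_⟩
    congr 1
    funext i
    exact (aux_idx_div d n l x i).symm
  · rintro ⟨k, hk⟩
    funext i
    rw [aux_idx_div d n l x i, hk, aux_sub_div]

/-- mass of a cell -/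
noncomputable def auxM (d : ℕ) (μ : Measure (EuclideanSpace ℝ (Fin d))) (n : ℕ)
    (j : Fin d → ℤ) : ℝ := (μ (dyadicCell d n j)).toReal

theorem auxM_nonneg (d : ℕ) (μ : Measure (EuclideanSpace ℝ (Fin d))) (n : ℕ)
    (j : Fin d → ℤ) : 0 ≤ auxM d μ n j := ENNReal.toReal_nonneg

theorem aux_sum_M (d : ℕ) (μ : Measure (EuclideanSpace ℝ (Fin d))) [IsProbabilityMeasure μ]
    (n l : ℕ) (j : Fin d → ℤ) :
    ∑ k, auxM d μ (n + l) (auxSub d l j k) = auxM d μ n j := by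
  have h : dyadicCell d n j = ⋃ k, dyadicCell d (n + l) (auxSub d l j k) := by
    ext x
    rw [Set.mem_iUnion]
    exact aux_cell_iff d n l j x
  have := measureReal_iUnion_fintype (μ := μ)
    (f := fun k => dyadicCell d (n + l) (auxSub d l j k)) (by
      intro k k' hne
      refine Set.disjoint_left.2 fun x hx hx' => hne ?_
      rw [aux_mem_cell] at hx hx'
      exact (aux_sub_inj d l j j k k' (hx.symm.trans hx')).2)
    (fun k => aux_meas_cell _ _ _)
  rw [← h] at this
  exact this.symm

theorem auxM_le (d : ℕ) (μ : Measure (EuclideanSpace ℝ (Fin d))) [IsProbabilityMeasure μ]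
    (n l : ℕ) (j : Fin d → ℤ) (k : Fin d → Fin (2 ^ l)) :
    auxM d μ (n + l) (auxSub d l j k) ≤ auxM d μ n j := by
  rw [← aux_sum_M d μ n l j]
  exact Finset.single_le_sum (f := fun k => auxM d μ (n + l) (auxSub d l j k))
    (fun k _ => auxM_nonneg _ _ _ _) (Finset.mem_univ k)

/-- lift of finite index -/
def auxLift (d n : ℕ) (j : Fin d → Fin (2 ^ n)) : Fin d → ℤ := fun i => ((j i : ℕ) : ℤ)

theorem aux_ae_unit (d : ℕ) (μ : Measure (EuclideanSpace ℝ (Fin d))) [IsProbabilityMeasure μ]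
    (hsupp : μ (unitCube d) = 1) : ∀ᵐ x ∂μ, x ∈ unitCube d :=
  (prob_compl_eq_zero_iff (aux_meas_cell d 0 0)).2 hsupp

theorem aux_lift_exists (d n : ℕ) (x : EuclideanSpace ℝ (Fin d)) (hx : x ∈ unitCube d) :
    ∃ j, dyadicIdx d n x = auxLift d n j := by
  have h := (aux_cell_iff d 0 n 0 x).1 hx
  obtain ⟨k, hk⟩ := h
  rw [aux_mem_cell, zero_add] at hk
  refine ⟨k, hk.trans ?_⟩
  funext i
  simp [auxSub, auxLift]

theorem aux_expand (d n l : ℕ) (h : (Fin d → ℤ) → (Fin d → ℤ) → ℝ)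
    (x : EuclideanSpace ℝ (Fin d)) (hx : x ∈ unitCube d) :
    h (dyadicIdx d n x) (dyadicIdx d (n + l) x) =
      ∑ j : Fin d → Fin (2 ^ n), ∑ k : Fin d → Fin (2 ^ l),
        (dyadicCell d (n + l) (auxSub d l (auxLift d n j) k)).indicator
          (fun _ => h (auxLift d n j) (auxSub d l (auxLift d n j) k)) x := by
  obtain ⟨j, hj⟩ := aux_lift_exists d n x hx
  obtain ⟨k, hk⟩ := (aux_cell_iff d n l _ x).1 ((aux_mem_cell d n _ x).2 hj)
  have hk' := (aux_mem_cell _ _ _ _).1 hk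
  rw [Finset.sum_eq_single j, Finset.sum_eq_single k]
  · rw [Set.indicator_of_mem hk, hj, hk']
  · intro k' _ hne
    refine Set.indicator_of_notMem (fun hm => hne ?_) _
    rw [aux_mem_cell, hk'] at hm
    exact (aux_sub_inj _ _ _ _ _ _ hm).2.symm
  · simp
  · intro j' _ hne
    refine Finset.sum_eq_zero fun k' _ => Set.indicator_of_notMem (fun hm => hne ?_) _
    rw [aux_mem_cell, hk'] at hm
    have := (aux_sub_inj _ _ _ _ _ _ hm).1
    funext i
    have := congrFun this i
    simp only [auxLift] at this
    apply Fin.ext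
    omega
  · simp

theorem aux_integral (d n l : ℕ) (μ : Measure (EuclideanSpace ℝ (Fin d))) [IsProbabilityMeasure μ]
    (hsupp : μ (unitCube d) = 1) (h : (Fin d → ℤ) → (Fin d → ℤ) → ℝ) :
    Integrable (fun x => h (dyadicIdx d n x) (dyadicIdx d (n + l) x)) μ ∧
    ∫ x, h (dyadicIdx d n x) (dyadicIdx d (n + l) x) ∂μ =
      ∑ j : Fin d → Fin (2 ^ n), ∑ k : Fin d → Fin (2 ^ l),
        auxM d μ (n + l) (auxSub d l (auxLift d n j) k) *
          h (auxLift d n j) (auxSub d l (auxLift d n j) k) := by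
  have hae : (fun x => h (dyadicIdx d n x) (dyadicIdx d (n + l) x)) =ᵐ[μ] fun x =>
      ∑ j : Fin d → Fin (2 ^ n), ∑ k : Fin d → Fin (2 ^ l),
        (dyadicCell d (n + l) (auxSub d l (auxLift d n j) k)).indicator
          (fun _ => h (auxLift d n j) (auxSub d l (auxLift d n j) k)) x := by
    filter_upwards [aux_ae_unit d μ hsupp] with x hx
    exact aux_expand d n l h x hx
  have hi : ∀ (j : Fin d → Fin (2 ^ n)) (k : Fin d → Fin (2 ^ l)), Integrable
      (fun x => (dyadicCell d (n + l) (auxSub d l (auxLift d n j) k)).indicator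
          (fun _ => h (auxLift d n j) (auxSub d l (auxLift d n j) k)) x) μ := fun j k =>
    (integrable_const _).indicator (aux_meas_cell _ _ _)
  constructor
  · exact (integrable_congr hae).2
      (integrable_finsetSum _ fun j _ => integrable_finsetSum _ fun k _ => hi j k)
  · rw [integral_congr_ae hae, integral_finsetSum _ fun j _ =>
      integrable_finsetSum _ fun k _ => hi j k]
    refine Finset.sum_congr rfl fun j _ => ?_
    rw [integral_finsetSum _ fun k _ => hi j k]
    refine Finset.sum_congr rfl fun k _ => ?_
    rw [integral_indicator (aux_meas_cell _ _ _), setIntegral_const, smul_eq_mul]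
    rfl

theorem aux_total (d n : ℕ) (μ : Measure (EuclideanSpace ℝ (Fin d))) [IsProbabilityMeasure μ]
    (hsupp : μ (unitCube d) = 1) : ∑ j : Fin d → Fin (2 ^ n), auxM d μ n (auxLift d n j) = 1 := by
  have h := (aux_integral d n 0 μ hsupp fun _ _ => 1).2
  simp only [mul_one, aux_sum_M] at h
  rw [← h]
  simp

/-- entropy as function of the index -/
noncomputable def auxH (d l n : ℕ) (μ : Measure (EuclideanSpace ℝ (Fin d)))
    (j : Fin d → ℤ) : ℝ :=
  ∑ k : Fin d → Fin (2 ^ l), -((auxM d μ (n + l) (auxSub d l j k) / auxM d μ n j) *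
    Real.logb 2 (auxM d μ (n + l) (auxSub d l j k) / auxM d μ n j))

theorem auxH_eq (d l n : ℕ) (μ : Measure (EuclideanSpace ℝ (Fin d)))
    (x : EuclideanSpace ℝ (Fin d)) : condEntropy' d l n μ x = auxH d l n μ (dyadicIdx d n x) := rfl

/-- information function -/
noncomputable def auxI (d l n : ℕ) (μ : Measure (EuclideanSpace ℝ (Fin d)))
    (j J : Fin d → ℤ) : ℝ := -Real.logb 2 (auxM d μ (n + l) J / auxM d μ n j)

theorem aux_p (d : ℕ) (μ : Measure (EuclideanSpace ℝ (Fin d))) [IsProbabilityMeasure μ]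
    (n l : ℕ) (j : Fin d → ℤ) (k : Fin d → Fin (2 ^ l)) :
    0 ≤ auxM d μ (n + l) (auxSub d l j k) / auxM d μ n j ∧
    auxM d μ (n + l) (auxSub d l j k) / auxM d μ n j ≤ 1 ∧
    auxM d μ (n + l) (auxSub d l j k) =
      auxM d μ n j * (auxM d μ (n + l) (auxSub d l j k) / auxM d μ n j) := by
  have h1 := auxM_nonneg d μ n j
  have h2 := auxM_nonneg d μ (n + l) (auxSub d l j k)
  have h3 := auxM_le d μ n l j k
  refine ⟨div_nonneg h2 h1, div_le_one_of_le₀ h3 h1, ?_⟩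
  rcases h1.eq_or_lt with h | h
  · rw [← h] at h3 ⊢
    simp
    linarith
  · field_simp

theorem aux_zero (d : ℕ) (μ : Measure (EuclideanSpace ℝ (Fin d))) [IsProbabilityMeasure μ]
    (n l : ℕ) (j : Fin d → ℤ) :
    ∑ k, auxM d μ (n + l) (auxSub d l j k) *
      (auxI d l n μ j (auxSub d l j k) - auxH d l n μ j) = 0 := by
  simp only [mul_sub, Finset.sum_sub_distrib, ← Finset.sum_mul, aux_sum_M]
  rw [auxH, Finset.mul_sum, sub_eq_zero]
  refine Finset.sum_congr rfl fun k _ => ?_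
  have := (aux_p d μ n l j k).2.2
  rw [auxI]
  nth_rewrite 1 [this]
  ring

theorem auxH_bound (d : ℕ) (μ : Measure (EuclideanSpace ℝ (Fin d))) [IsProbabilityMeasure μ]
    (n l : ℕ) (j : Fin d → ℤ) :
    (auxH d l n μ j) ^ 2 ≤
      ((Fintype.card (Fin d → Fin (2 ^ l)) : ℝ) * (1 / Real.log 2)) ^ 2 := by
  rw [← sq_abs (auxH d l n μ j)]
  refine pow_le_pow_left₀ (abs_nonneg _) ?_ 2
  refine (Finset.abs_sum_le_sum_abs _ _).trans ?_
  refine (Finset.sum_le_sum (g := fun _ => 1 / Real.log 2) fun k _ => ?_).trans (by simp)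
  rw [abs_neg]
  have := aux_p d μ n l j k
  exact aux_plog _ this.1 this.2.1

theorem auxI_bound (d : ℕ) (μ : Measure (EuclideanSpace ℝ (Fin d))) [IsProbabilityMeasure μ]
    (hsupp : μ (unitCube d) = 1) (n l : ℕ) :
    ∫ x, (auxI d l n μ (dyadicIdx d n x) (dyadicIdx d (n + l) x)) ^ 2 ∂μ ≤
      (Fintype.card (Fin d → Fin (2 ^ l)) : ℝ) * (4 / (Real.log 2) ^ 2) := by
  rw [(aux_integral d n l μ hsupp fun j J => (auxI d l n μ j J) ^ 2).2]
  calc _ ≤ ∑ j : Fin d → Fin (2 ^ n), ∑ k : Fin d → Fin (2 ^ l),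
        auxM d μ n (auxLift d n j) * (4 / (Real.log 2) ^ 2) := by
        refine Finset.sum_le_sum fun j _ => Finset.sum_le_sum fun k _ => ?_
        obtain ⟨h1, h2, h3⟩ := aux_p d μ n l (auxLift d n j) k
        have := aux_plog2 _ h1 h2
        have h4 := mul_le_mul_of_nonneg_left this (auxM_nonneg d μ n (auxLift d n j))
        refine le_of_eq_of_le ?_ h4
        rw [← mul_assoc, ← h3, auxI, neg_sq]
    _ = (∑ j : Fin d → Fin (2 ^ n), auxM d μ n (auxLift d n j)) *
        ((Fintype.card (Fin d → Fin (2 ^ l)) : ℝ) * (4 / (Real.log 2) ^ 2)) := by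
        rw [Finset.sum_mul]
        refine Finset.sum_congr rfl fun j _ => ?_
        rw [Finset.sum_const, nsmul_eq_mul, Finset.card_univ]
        ring
    _ = _ := by rw [aux_total d n μ hsupp, one_mul]

/-- the difference -/
noncomputable def auxD (d l n : ℕ) (μ : Measure (EuclideanSpace ℝ (Fin d)))
    (x : EuclideanSpace ℝ (Fin d)) : ℝ :=
  auxI d l n μ (dyadicIdx d n x) (dyadicIdx d (n + l) x) - auxH d l n μ (dyadicIdx d n x)

theorem auxD_memLp (d : ℕ) (μ : Measure (EuclideanSpace ℝ (Fin d))) [IsProbabilityMeasure μ]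
    (hsupp : μ (unitCube d) = 1) (n l : ℕ) : MemLp (auxD d l n μ) 2 μ := by
  have h1 := (aux_integral d n l μ hsupp fun j J => auxI d l n μ j J - auxH d l n μ j).1
  have h2 := (aux_integral d n l μ hsupp fun j J => (auxI d l n μ j J - auxH d l n μ j) ^ 2).1
  exact (memLp_two_iff_integrable_sq h1.aestronglyMeasurable).2 h2

theorem auxD_bound (d l : ℕ) (μ : Measure (EuclideanSpace ℝ (Fin d))) [IsProbabilityMeasure μ]
    (hsupp : μ (unitCube d) = 1) : ∃ C, ∀ n, ∫ x, (auxD d l n μ x) ^ 2 ∂μ ≤ C := by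
  set A := (Fintype.card (Fin d → Fin (2 ^ l)) : ℝ) * (4 / (Real.log 2) ^ 2)
  set B := ((Fintype.card (Fin d → Fin (2 ^ l)) : ℝ) * (1 / Real.log 2)) ^ 2
  refine ⟨2 * A + 2 * B, fun n => ?_⟩
  have hi := (aux_integral d n l μ hsupp fun j J => (auxI d l n μ j J) ^ 2).1
  have hD := (auxD_memLp d μ hsupp n l).integrable_sq
  have hI := auxI_bound d μ hsupp n l
  calc _ ≤ ∫ x, (2 * (auxI d l n μ (dyadicIdx d n x) (dyadicIdx d (n + l) x)) ^ 2 + 2 * B) ∂μ := by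
        refine integral_mono hD ((hi.const_mul 2).add (integrable_const _)) fun x => ?_
        have := auxH_bound d μ n l (dyadicIdx d n x)
        simp only [auxD, Pi.add_apply]
        nlinarith [sq_nonneg (auxI d l n μ (dyadicIdx d n x) (dyadicIdx d (n + l) x) +
          auxH d l n μ (dyadicIdx d n x))]
    _ = 2 * ∫ x, (auxI d l n μ (dyadicIdx d n x) (dyadicIdx d (n + l) x)) ^ 2 ∂μ + 2 * B := by
        rw [integral_add (hi.const_mul 2) (integrable_const _), integral_const_mul]
        simp
    _ ≤ _ := by linarith

theorem auxD_orth (d l : ℕ) (μ : Measure (EuclideanSpace ℝ (Fin d))) [IsProbabilityMeasure μ]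
    (hsupp : μ (unitCube d) = 1) (a b : ℕ) (hab : a + l ≤ b) :
    ∫ x, auxD d l a μ x * auxD d l b μ x ∂μ = 0 := by
  obtain ⟨c, rfl⟩ := Nat.exists_eq_add_of_le hab
  have e1 : ∀ x, dyadicIdx d a x = fun i => dyadicIdx d (a + l + c) x i / 2 ^ (l + c) := by
    intro x; funext i
    rw [aux_idx_div d a (l + c) x i, add_assoc]
  have e2 : ∀ x, dyadicIdx d (a + l) x = fun i => dyadicIdx d (a + l + c) x i / 2 ^ c := by
    intro x; funext i
    rw [aux_idx_div d (a + l) c x i]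
  let g : (Fin d → ℤ) → ℝ := fun j =>
    auxI d l a μ (fun i => j i / 2 ^ (l + c)) (fun i => j i / 2 ^ c) -
      auxH d l a μ (fun i => j i / 2 ^ (l + c))
  have hg : ∀ x, auxD d l a μ x = g (dyadicIdx d (a + l + c) x) := by
    intro x
    simp only [auxD, g, ← e1, ← e2]
  simp only [hg]
  have := (aux_integral d (a + l + c) l μ hsupp fun j J =>
    g j * (auxI d l (a + l + c) μ j J - auxH d l (a + l + c) μ j)).2
  refine this.trans (Finset.sum_eq_zero fun j _ => ?_)
  simp only [mul_left_comm _ (g _), ← Finset.mul_sum, aux_zero, mul_zero]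

theorem aux_ae_pos (d : ℕ) (μ : Measure (EuclideanSpace ℝ (Fin d))) [IsProbabilityMeasure μ] :
    ∀ᵐ x ∂μ, ∀ n, 0 < auxM d μ n (dyadicIdx d n x) := by
  rw [ae_all_iff]
  intro n
  have h : ∀ᵐ x ∂μ, ∀ j, μ (dyadicCell d n j) = 0 → x ∉ dyadicCell d n j := by
    rw [ae_all_iff]
    intro j
    by_cases hj : μ (dyadicCell d n j) = 0
    · filter_upwards [measure_eq_zero_iff_ae_notMem.1 hj] with x hx _
      exact hx
    · exact ae_of_all _ fun x h => absurd h hj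
  filter_upwards [h] with x hx
  refine ENNReal.toReal_pos (fun h0 => ?_) (measure_ne_top _ _)
  exact hx _ h0 ((aux_mem_cell _ _ _ _).2 rfl)

theorem stmt3 (d ℓ : ℕ) (hd : 0 < d) (hℓ : 0 < ℓ)
    (μ : Measure (EuclideanSpace ℝ (Fin d))) [IsProbabilityMeasure μ]
    (hsupp : μ (unitCube d) = 1)
    (hbd : ∀ Q, IsDyadicCube d Q → μ (frontier Q) = 0) :
    ∀ᵐ x ∂μ,
      Filter.Tendsto (fun n : ℕ =>
          (1 / (n : ℝ)) * (-(Real.logb 2 (μ (Qcube d n x)).toReal) -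
            (1 / (ℓ : ℝ)) * ∑ i ∈ Finset.Icc 1 n, condEntropy' d ℓ i μ x))
        atTop (nhds 0) := by
  obtain ⟨C, hC⟩ := auxD_bound d ℓ μ hsupp
  have hS := aux_slln (μ := μ) (fun i => auxD d ℓ (i + 1) μ) C ℓ
    (fun i => auxD_memLp d μ hsupp (i + 1) ℓ) (fun i => hC (i + 1))
    (fun i j hij => auxD_orth d ℓ μ hsupp (i + 1) (j + 1) (by omega))
  have hI := aux_bc (μ := μ)
    (fun n x => auxI d ℓ n μ (dyadicIdx d n x) (dyadicIdx d (n + ℓ) x) / (n : ℝ))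
    (fun n => by
      simp_rw [div_pow]
      exact (aux_integral d n ℓ μ hsupp fun j J => (auxI d ℓ n μ j J) ^ 2).1.div_const _)
    _ (aux_summable _) (fun n => by
      simp_rw [div_pow]
      rw [integral_div]
      exact div_le_div_of_nonneg_right (auxI_bound d μ hsupp n ℓ) (by positivity))
  filter_upwards [hS, hI, aux_ae_pos d μ] with x h1 h2 hpos
  have hL : ∀ n, auxI d ℓ n μ (dyadicIdx d n x) (dyadicIdx d (n + ℓ) x) =
      -Real.logb 2 (auxM d μ (n + ℓ) (dyadicIdx d (n + ℓ) x)) -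
        -Real.logb 2 (auxM d μ n (dyadicIdx d n x)) := by
    intro n
    rw [auxI, Real.logb_div (hpos _).ne' (hpos _).ne']
    ring
  refine aux_final (fun n => -Real.logb 2 (auxM d μ n (dyadicIdx d n x)))
    (fun n => condEntropy' d ℓ n μ x) ℓ hℓ ?_ ?_ ?_
  · refine monotone_nat_of_le_succ fun n => ?_
    have : auxM d μ (n + 1) (dyadicIdx d (n + 1) x) ≤ auxM d μ n (dyadicIdx d n x) := by
      obtain ⟨k, hk⟩ := (aux_cell_iff d n 1 _ x).1 ((aux_mem_cell d n _ x).2 rfl)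
      rw [(aux_mem_cell _ _ _ _).1 hk]
      exact auxM_le d μ n 1 _ k
    exact neg_le_neg (Real.logb_le_logb_of_le (by norm_num) (hpos _) this)
  · simpa only [hL] using h2
  · simpa only [auxD, hL, ← auxH_eq] using h1
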